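/- Let 𝒫 be a configuration of n points in general position in the plane. Then the convex hull of 𝒫 has size 3 if and only if there exist three distinct points P, Q, R of 𝒫 with n(P,Q) + n(P,R) + n(Q,R) = n² − 4n + 3; moreover, in that case P, Q, R are exactly the vertices of the convex hull of 𝒫. -/

import Mathlib

open scoped Classical

noncomputable section

/-- The set Pts is in general position: no three distinct points are collinear. -/
def GenPos (Pts : Finset (ℝ × ℝ)) : Prop :=
  ∀ A ∈ Pts, ∀ B ∈ Pts, ∀ C ∈ Pts, A ≠ B → A ≠ C → B ≠ C →
    ¬ Collinear ℝ ({A, B, C} : Set (ℝ × ℝ))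

/-- `sepCount Pts P Q` is the number of unordered pairs `{R, S}` of points of `Pts \ {P, Q}`
such that the line through `R` and `S` strictly separates `P` and `Q`. -/
def sepCount (Pts : Finset (ℝ × ℝ)) (P Q : ℝ × ℝ) : ℕ :=
  ((Finset.powersetCard 2 (Pts \ {P, Q})).filter
    (fun s => (affineSpan ℝ (↑s : Set (ℝ × ℝ))).SOppSide P Q)).card

/-- The vertices of the convex hull of `Pts` (its extreme points). -/
def hullVertices (Pts : Finset (ℝ × ℝ)) : Set (ℝ × ℝ) :=
  Set.extremePoints ℝ (convexHull ℝ (↑Pts : Set (ℝ × ℝ)))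

/-- `Q : ZMod k → ℝ × ℝ` lists the points of `S` in convex position, in cyclic order:
`Q` is an injective enumeration of `S` and, for every `i`, all points of `S` other than
`Q i` and `Q (i+1)` lie strictly on the same side of the line through `Q i` and `Q (i+1)`
(i.e. each consecutive pair spans an edge of the convex hull of `S`). -/
def IsConvexCycle (k : ℕ) (S : Set (ℝ × ℝ)) (Q : ZMod k → ℝ × ℝ) : Prop :=
  Function.Injective Q ∧ Set.range Q = S ∧
    ∀ i : ZMod k, ∀ x ∈ S, ∀ y ∈ S,
      x ∉ ({Q i, Q (i + 1)} : Set (ℝ × ℝ)) → y ∉ ({Q i, Q (i + 1)} : Set (ℝ × ℝ)) →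
        (affineSpan ℝ ({Q i, Q (i + 1)} : Set (ℝ × ℝ))).SSameSide x y

/-- Signed doubled area of the triangle `A B C`. -/
def orD (A B C : ℝ × ℝ) : ℝ := (B.1 - A.1) * (C.2 - A.2) - (B.2 - A.2) * (C.1 - A.1)

lemma mem_line_iff {A B X : ℝ × ℝ} (h : A ≠ B) :
    X ∈ affineSpan ℝ ({A, B} : Set (ℝ × ℝ)) ↔ orD A B X = 0 := by
  rw [mem_affineSpan_pair_iff_exists_lineMap_eq]
  obtain ⟨a1, a2⟩ := A
  obtain ⟨b1, b2⟩ := B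
  obtain ⟨x1, x2⟩ := X
  simp only [AffineMap.lineMap_apply, orD, vsub_eq_sub, vadd_eq_add, Prod.ext_iff, Prod.fst_add,
    Prod.snd_add, Prod.smul_fst, Prod.smul_snd, Prod.fst_sub, Prod.snd_sub, smul_eq_mul]
  constructor
  · rintro ⟨r, h1, h2⟩
    rw [← h1, ← h2]; ring
  · intro hD
    by_cases h1 : b1 - a1 = 0
    · have h2 : b2 - a2 ≠ 0 := by
        intro h2
        apply h
        ext <;> simp <;> linarith
      refine ⟨(x2 - a2) / (b2 - a2), ?_, ?_⟩
      · rw [h1] at hD ⊢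
        have : x1 - a1 = 0 := by
          have : (b2 - a2) * (x1 - a1) = 0 := by linarith
          exact (mul_eq_zero.mp this).resolve_left h2
        linarith
      · field_simp; ring
    · refine ⟨(x1 - a1) / (b1 - a1), ?_, ?_⟩
      · field_simp; ring
      · field_simp; linarith

lemma collinear_iff_orD {A B C : ℝ × ℝ} (h : A ≠ B) :
    Collinear ℝ ({A, B, C} : Set (ℝ × ℝ)) ↔ orD A B C = 0 := by
  rw [← mem_line_iff h]
  constructor
  · intro hc
    exact hc.mem_affineSpan_of_mem_of_ne (by simp) (by simp) (by simp) h
  · intro hm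
    have := collinear_insert_of_mem_affineSpan_pair hm
    have e : ({A, B, C} : Set (ℝ × ℝ)) = {C, A, B} := by ext; simp; tauto
    rwa [e]

lemma sOpp_iff {A B P Q : ℝ × ℝ} (h : A ≠ B) :
    (affineSpan ℝ ({A, B} : Set (ℝ × ℝ))).SOppSide P Q ↔ orD A B P * orD A B Q < 0 := by
  have aff : ∀ t : ℝ, orD A B (AffineMap.lineMap P Q t) =
      (1 - t) * orD A B P + t * orD A B Q := by
    intro t
    simp only [AffineMap.lineMap_apply, orD, vsub_eq_sub, vadd_eq_add, Prod.fst_add,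
      Prod.snd_add, Prod.smul_fst, Prod.smul_snd, Prod.fst_sub, Prod.snd_sub, smul_eq_mul]
    ring
  rw [AffineSubspace.SOppSide, AffineSubspace.wOppSide_iff_exists_wbtw, mem_line_iff h,
    mem_line_iff h]
  constructor
  · rintro ⟨⟨p, hp, t, ⟨ht0, ht1⟩, rfl⟩, hP, hQ⟩
    rw [mem_line_iff h, aff] at hp
    by_contra hc
    push Not at hc
    have hne : 0 < orD A B P * orD A B Q := lt_of_le_of_ne hc (mul_ne_zero hP hQ).symm
    have hP2 : 0 < orD A B P ^ 2 := by positivity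
    have : (1 - t) * orD A B P ^ 2 + t * (orD A B P * orD A B Q) = 0 := by
      linear_combination orD A B P * hp
    rcases ht0.eq_or_lt with h0 | h0
    · subst h0; nlinarith
    · nlinarith [mul_pos h0 hne, mul_nonneg (sub_nonneg.mpr ht1) hP2.le]
  · intro hlt
    have hP : orD A B P ≠ 0 := by intro h0; rw [h0] at hlt; simp at hlt
    have hQ : orD A B Q ≠ 0 := by intro h0; rw [h0] at hlt; simp at hlt
    have hd : orD A B P - orD A B Q ≠ 0 := by
      intro h0
      have : orD A B P = orD A B Q := by linarith
      rw [this] at hlt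
      nlinarith [mul_self_nonneg (orD A B Q)]
    have hd2 : 0 < (orD A B P - orD A B Q) ^ 2 := by positivity
    refine ⟨⟨_, ?_, orD A B P / (orD A B P - orD A B Q), ⟨?_, ?_⟩, rfl⟩, hP, hQ⟩
    · rw [mem_line_iff h, aff]
      field_simp; ring
    · have : orD A B P / (orD A B P - orD A B Q) =
        (orD A B P * (orD A B P - orD A B Q)) / (orD A B P - orD A B Q) ^ 2 := by
        field_simp
      rw [this]
      apply div_nonneg _ hd2.le
      nlinarith [sq_nonneg (orD A B P)]
    · have : 1 - orD A B P / (orD A B P - orD A B Q) =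
        (orD A B Q * (orD A B Q - orD A B P)) / (orD A B P - orD A B Q) ^ 2 := by
        field_simp; ring
      have h2 : 0 ≤ 1 - orD A B P / (orD A B P - orD A B Q) := by
        rw [this]
        apply div_nonneg _ hd2.le
        nlinarith [sq_nonneg (orD A B Q)]
      linarith

/-- `X` is strictly inside the triangle `P Q R`. -/
def Ins (P Q R X : ℝ × ℝ) : Prop :=
  0 < orD P Q X * orD Q R X ∧ 0 < orD Q R X * orD R P X ∧ 0 < orD P Q X * orD R P X

/-- Indicator that the line through the pair `s` separates `P` and `Q`. -/
def ind (P Q : ℝ × ℝ) (s : Finset (ℝ × ℝ)) : ℕ :=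
  if (affineSpan ℝ (↑s : Set (ℝ × ℝ))).SOppSide P Q then 1 else 0

lemma sepCount_eq (Pts : Finset (ℝ × ℝ)) (P Q : ℝ × ℝ) :
    sepCount Pts P Q = ∑ s ∈ Finset.powersetCard 2 Pts, ind P Q s := by
  unfold ind
  rw [← Finset.card_filter]
  have hinj : Function.Injective (fun s : Finset (ℝ × ℝ) => (↑s : Set (ℝ × ℝ))) :=
    Finset.coe_injective
  have himg : sepCount Pts P Q = (((Finset.powersetCard 2 (Pts \ {P, Q})).filter
      (fun s : Finset (ℝ × ℝ) => (affineSpan ℝ (↑s : Set (ℝ × ℝ))).SOppSide P Q)).image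
        (fun s : Finset (ℝ × ℝ) => (↑s : Set (ℝ × ℝ)))).card := by
    unfold sepCount
    refine congrArg Finset.card ?_
    ext t
    simp only [Finset.mem_filter, Finset.mem_image, Finset.bind_def, Finset.pure_def,
      Finset.mem_sup, Finset.mem_singleton]
    constructor
    · rintro ⟨⟨s, hs, rfl⟩, h⟩
      exact ⟨s, ⟨hs, h⟩, rfl⟩
    · rintro ⟨s, ⟨hs, h⟩, rfl⟩
      exact ⟨⟨s, hs, rfl⟩, h⟩
  rw [himg, Finset.card_image_of_injective _ hinj]
  refine congrArg Finset.card ?_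
  ext s
  simp only [Finset.mem_filter, Finset.mem_powersetCard]
  constructor
  · rintro ⟨⟨h1, h2⟩, h3⟩
    exact ⟨⟨h1.trans Finset.sdiff_subset, h2⟩, h3⟩
  · rintro ⟨⟨h1, h2⟩, h3⟩
    refine ⟨⟨?_, h2⟩, h3⟩
    intro x hx
    simp only [Finset.mem_sdiff, Finset.mem_insert, Finset.mem_singleton, not_or]
    refine ⟨h1 hx, ?_, ?_⟩
    · rintro rfl
      exact h3.left_notMem (subset_affineSpan ℝ _ hx)
    · rintro rfl
      exact h3.right_notMem (subset_affineSpan ℝ _ hx)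

lemma sum_card_sdiff (Pts T : Finset (ℝ × ℝ)) (hT : T ⊆ Pts) :
    ∑ s ∈ Finset.powersetCard 2 Pts, (s \ T).card = (Pts.card - T.card) * (Pts.card - 1) := by
  have h1 : ∀ s ∈ Finset.powersetCard 2 Pts,
      (s \ T).card = ∑ x ∈ Pts \ T, if x ∈ s then 1 else 0 := by
    intro s hs
    rw [← Finset.card_filter]
    congr 1
    ext x
    have := (Finset.mem_powersetCard.mp hs).1
    simp only [Finset.mem_sdiff, Finset.mem_filter]
    constructor
    · rintro ⟨a, b⟩; exact ⟨⟨this a, b⟩, a⟩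
    · rintro ⟨⟨a, b⟩, c⟩; exact ⟨c, b⟩
  rw [Finset.sum_congr rfl h1, Finset.sum_comm]
  have h2 : ∀ x ∈ Pts \ T,
      (∑ s ∈ Finset.powersetCard 2 Pts, if x ∈ s then 1 else 0) = Pts.card - 1 := by
    intro x hx
    have hx' := (Finset.mem_sdiff.mp hx).1
    rw [← Finset.card_filter]
    have := Finset.card_filter_powersetCard_subset (s := {x}) (t := Pts) (n := 2) (by simpa using hx') (by simp)
    simpa using this
  rw [Finset.sum_congr rfl h2, Finset.sum_const, smul_eq_mul, Finset.card_sdiff_of_subset hT]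

lemma ind_pair {A B : ℝ × ℝ} (h : A ≠ B) (P Q : ℝ × ℝ) :
    ind P Q {A, B} = if orD A B P * orD A B Q < 0 then 1 else 0 := by
  unfold ind
  rw [Finset.coe_pair]
  simp only [sOpp_iff h]

lemma orD_left (A B : ℝ × ℝ) : orD A B A = 0 := by unfold orD; ring
lemma orD_right (A B : ℝ × ℝ) : orD A B B = 0 := by unfold orD; ring
lemma orD_rot (A B C : ℝ × ℝ) : orD A B C = orD B C A := by unfold orD; ring
lemma orD_swap (A B C : ℝ × ℝ) : orD A B C = - orD A C B := by unfold orD; ring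

lemma three_le (a b c : ℝ) :
    (if a * b < 0 then 1 else 0) + (if a * c < 0 then 1 else 0) +
      (if b * c < 0 then 1 else 0) ≤ 2 := by
  split_ifs with h1 h2 h3 <;> try norm_num
  nlinarith [mul_pos_of_neg_of_neg h1 h2, mul_self_nonneg a,
    mul_nonneg (mul_self_nonneg a) (mul_self_nonneg b), mul_self_nonneg (a*b*c),
    mul_neg_of_pos_of_neg (mul_pos_of_neg_of_neg h1 h2) h3]

lemma three_eq {a b c : ℝ} (ha : a ≠ 0) (hb : b ≠ 0) (hc : c ≠ 0)
    (h : a * b < 0 ∨ a * c < 0 ∨ b * c < 0) :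
    (if a * b < 0 then 1 else 0) + (if a * c < 0 then 1 else 0) +
      (if b * c < 0 then 1 else 0) = 2 := by
  rcases lt_or_gt_of_ne ha with ha | ha <;> rcases lt_or_gt_of_ne hb with hb | hb <;>
    rcases lt_or_gt_of_ne hc with hc | hc <;>
    simp [mul_neg_iff, ha, hb, hc, ha.le, hb.le, hc.le, ha.not_gt, hb.not_gt, hc.not_gt] at h ⊢

/-- Contribution bound when exactly one vertex is on the line. -/
lemma ins_iff_ind {P Q R X : ℝ × ℝ} (hP : X ≠ P) (hQ : X ≠ Q) (hR : X ≠ R) :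
    Ins P Q R X ↔ ind Q R {P, X} = 1 ∧ ind P R {Q, X} = 1 ∧ ind P Q {R, X} = 1 := by
  rw [ind_pair hP.symm, ind_pair hQ.symm, ind_pair hR.symm]
  have e1 : orD P X Q * orD P X R = - (orD P Q X * orD R P X) := by unfold orD; ring
  have e2 : orD Q X P * orD Q X R = - (orD P Q X * orD Q R X) := by unfold orD; ring
  have e3 : orD R X P * orD R X Q = - (orD Q R X * orD R P X) := by unfold orD; ring
  rw [e1, e2, e3]
  simp only [Ins, neg_lt_zero, ite_eq_left_iff, zero_ne_one, imp_false, not_not]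
  tauto

lemma ind_zero_left {P Q : ℝ × ℝ} {s : Finset (ℝ × ℝ)} (h : P ∈ s) : ind P Q s = 0 := by
  unfold ind
  rw [if_neg]
  intro h3
  exact h3.left_notMem (subset_affineSpan ℝ _ h)

lemma ind_zero_right {P Q : ℝ × ℝ} {s : Finset (ℝ × ℝ)} (h : Q ∈ s) : ind P Q s = 0 := by
  unfold ind
  rw [if_neg]
  intro h3
  exact h3.right_notMem (subset_affineSpan ℝ _ h)

lemma ind_le_one (P Q : ℝ × ℝ) (s : Finset (ℝ × ℝ)) : ind P Q s ≤ 1 := by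
  unfold ind; split_ifs <;> simp

/-- Total contribution of the pair `s`. -/
def tot (P Q R : ℝ × ℝ) (s : Finset (ℝ × ℝ)) : ℕ := ind P Q s + ind P R s + ind Q R s

lemma card_pair_sdiff {A B : ℝ × ℝ} (h : A ≠ B) (T : Finset (ℝ × ℝ)) :
    (({A, B} : Finset (ℝ × ℝ)) \ T).card = (if A ∈ T then 0 else 1) + (if B ∈ T then 0 else 1) := by
  have hB1 : B ∉ T → ({B} : Finset (ℝ × ℝ)) \ T = {B} := fun hB =>
    Finset.sdiff_eq_self_of_disjoint (Finset.disjoint_singleton_left.mpr hB)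
  by_cases hA : A ∈ T <;> by_cases hB : B ∈ T <;>
    simp [Finset.insert_sdiff_of_mem, Finset.insert_sdiff_of_notMem,
      Finset.sdiff_eq_empty_iff_subset, Finset.sdiff_singleton_eq_erase, hB1, hA, hB, h]

lemma tot_one {P Q R A : ℝ × ℝ} {s : Finset (ℝ × ℝ)} (hA : A ∈ s)
    (hT : A ∈ ({P, Q, R} : Finset (ℝ × ℝ))) : tot P Q R s ≤ 1 := by
  simp only [Finset.mem_insert, Finset.mem_singleton] at hT
  unfold tot
  rcases hT with rfl | rfl | rfl
  · rw [ind_zero_left hA, ind_zero_left hA]; simpa using ind_le_one _ _ _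
  · rw [ind_zero_right hA, ind_zero_left hA]; simpa using ind_le_one _ _ _
  · rw [ind_zero_right hA, ind_zero_right hA]; simpa using ind_le_one _ _ _

lemma tot_zero {P Q R A B : ℝ × ℝ} (h : A ≠ B)
    (hA : A ∈ ({P, Q, R} : Finset (ℝ × ℝ))) (hB : B ∈ ({P, Q, R} : Finset (ℝ × ℝ))) :
    tot P Q R {A, B} = 0 := by
  unfold tot
  rw [ind_pair h, ind_pair h, ind_pair h]
  simp only [Finset.mem_insert, Finset.mem_singleton] at hA hB
  rcases hA with rfl | rfl | rfl <;> rcases hB with rfl | rfl | rfl <;>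
    simp [orD_left, orD_right] at h ⊢

lemma tot_le {P Q R A B : ℝ × ℝ} (h : A ≠ B) :
    tot P Q R {A, B} ≤ (({A, B} : Finset (ℝ × ℝ)) \ {P, Q, R}).card := by
  rw [card_pair_sdiff h]
  by_cases hA : A ∈ ({P, Q, R} : Finset (ℝ × ℝ)) <;>
    by_cases hB : B ∈ ({P, Q, R} : Finset (ℝ × ℝ))
  · rw [tot_zero h hA hB]; omega
  · rw [if_pos hA, if_neg hB]
    exact tot_one (A := A) (by simp) hA
  · rw [if_pos hB, if_neg hA]
    exact tot_one (A := B) (by simp) hB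
  · rw [if_neg hA, if_neg hB]
    unfold tot
    rw [ind_pair h, ind_pair h, ind_pair h]
    exact three_le _ _ _

lemma tot_vertex {P Q R A X : ℝ × ℝ} (hP : X ≠ P) (hQ : X ≠ Q) (hR : X ≠ R)
    (hA : A ∈ ({P, Q, R} : Finset (ℝ × ℝ))) (hX : Ins P Q R X) : tot P Q R {A, X} = 1 := by
  obtain ⟨h1, h2, h3⟩ := (ins_iff_ind hP hQ hR).mp hX
  unfold tot
  simp only [Finset.mem_insert, Finset.mem_singleton] at hA
  rcases hA with rfl | rfl | rfl
  · rw [h1, ind_zero_left (by simp), ind_zero_left (by simp)]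
  · rw [h2, ind_zero_right (by simp), ind_zero_left (by simp)]
  · rw [h3, ind_zero_right (by simp), ind_zero_right (by simp)]

lemma tot_two {P Q R A B : ℝ × ℝ} (h : A ≠ B) (hA : Ins P Q R A)
    (hP : orD A B P ≠ 0) (hQ : orD A B Q ≠ 0) (hR : orD A B R ≠ 0) :
    tot P Q R {A, B} = 2 := by
  unfold tot
  rw [ind_pair h, ind_pair h, ind_pair h]
  apply three_eq hP hQ hR
  by_contra hc
  push Not at hc
  obtain ⟨h1, h2, h3⟩ := hc
  have e : orD P Q A * orD A B R + orD Q R A * orD A B P + orD R P A * orD A B Q = 0 := by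
    unfold orD; ring
  obtain ⟨i1, i2, i3⟩ := hA
  have hu : orD P Q A ≠ 0 := by intro h0; rw [h0] at i1; simp at i1
  have e2 : (orD P Q A * orD P Q A) * (orD A B R * orD A B R)
      + (orD P Q A * orD Q R A) * (orD A B P * orD A B R)
      + (orD P Q A * orD R P A) * (orD A B Q * orD A B R) = 0 := by
    linear_combination (orD P Q A * orD A B R) * e
  have p1 : 0 < (orD P Q A * orD P Q A) * (orD A B R * orD A B R) :=
    mul_pos (mul_self_pos.mpr hu) (mul_self_pos.mpr hR)
  have p2 := mul_nonneg i1.le h2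
  have p3 := mul_nonneg i3.le h3
  linarith

lemma GenPos.orD_ne {Pts : Finset (ℝ × ℝ)} (hg : GenPos Pts) {A B C : ℝ × ℝ}
    (hA : A ∈ Pts) (hB : B ∈ Pts) (hC : C ∈ Pts) (h1 : A ≠ B) (h2 : A ≠ C) (h3 : B ≠ C) :
    orD A B C ≠ 0 := fun h => hg A hA B hB C hC h1 h2 h3 ((collinear_iff_orD h1).mpr h)

lemma sum_iff {Pts : Finset (ℝ × ℝ)} (hg : GenPos Pts) {P Q R : ℝ × ℝ}
    (hP : P ∈ Pts) (hQ : Q ∈ Pts) (hR : R ∈ Pts) (hPQ : P ≠ Q) (hPR : P ≠ R) (hQR : Q ≠ R) :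
    (sepCount Pts P Q + sepCount Pts P R + sepCount Pts Q R : ℤ)
        = (Pts.card : ℤ)^2 - 4 * Pts.card + 3 ↔
      ∀ X ∈ Pts, X ≠ P → X ≠ Q → X ≠ R → Ins P Q R X := by
  have hT : ({P, Q, R} : Finset (ℝ × ℝ)) ⊆ Pts := by
    intro x; simp only [Finset.mem_insert, Finset.mem_singleton]; rintro (rfl | rfl | rfl) <;> assumption
  have hTc : ({P, Q, R} : Finset (ℝ × ℝ)).card = 3 :=
    Finset.card_eq_three.mpr ⟨P, Q, R, hPQ, hPR, hQR, rfl⟩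
  have h3 : 3 ≤ Pts.card := hTc ▸ Finset.card_le_card hT
  have key := sum_card_sdiff Pts {P, Q, R} hT
  rw [hTc] at key
  have hle : ∀ s ∈ Finset.powersetCard 2 Pts,
      tot P Q R s ≤ (s \ ({P, Q, R} : Finset (ℝ × ℝ))).card := by
    intro s hs
    obtain ⟨A, B, hAB, rfl⟩ := Finset.card_eq_two.mp (Finset.mem_powersetCard.mp hs).2
    exact tot_le hAB
  have hiff := Finset.sum_eq_sum_iff_of_le hle
  have hsum : sepCount Pts P Q + sepCount Pts P R + sepCount Pts Q R =
      ∑ s ∈ Finset.powersetCard 2 Pts, tot P Q R s := by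
    simp only [sepCount_eq, tot, Finset.sum_add_distrib]
  have hz : (Pts.card : ℤ)^2 - 4 * Pts.card + 3 = (((Pts.card - 3) * (Pts.card - 1) : ℕ) : ℤ) := by
    push_cast [Nat.cast_sub h3, Nat.cast_sub (show 1 ≤ Pts.card by omega)]
    ring
  rw [hz, ← key]
  norm_cast
  rw [hsum, hiff]
  constructor
  · intro H X hX h1 h2 h3
    have hXT : X ∉ ({P, Q, R} : Finset (ℝ × ℝ)) := by simp [h1, h2, h3]
    have HH : ∀ A ∈ ({P, Q, R} : Finset (ℝ × ℝ)), tot P Q R {A, X} = 1 := by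
      intro A hA
      have hAX : A ≠ X := by rintro rfl; exact hXT hA
      have := H {A, X} (by
        rw [Finset.mem_powersetCard]
        refine ⟨?_, Finset.card_pair hAX⟩
        intro y; simp only [Finset.mem_insert, Finset.mem_singleton]
        rintro (rfl | rfl)
        · exact hT hA
        · exact hX)
      rwa [card_pair_sdiff hAX, if_pos hA, if_neg hXT] at this
    rw [ins_iff_ind h1 h2 h3]
    have a1 := HH P (by simp)
    have a2 := HH Q (by simp)
    have a3 := HH R (by simp)
    unfold tot at a1 a2 a3
    rw [ind_zero_left (by simp), ind_zero_left (by simp)] at a1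
    rw [ind_zero_right (P := P) (Q := Q) (by simp), ind_zero_left (P := Q) (by simp)] at a2
    rw [ind_zero_right (P := P) (Q := R) (by simp), ind_zero_right (P := Q) (by simp)] at a3
    exact ⟨by simpa using a1, by simpa using a2, by simpa using a3⟩
  · intro H s hs
    obtain ⟨hsub, hc⟩ := Finset.mem_powersetCard.mp hs
    obtain ⟨A, B, hAB, rfl⟩ := Finset.card_eq_two.mp hc
    have hAm : A ∈ Pts := hsub (by simp)
    have hBm : B ∈ Pts := hsub (by simp)
    rw [card_pair_sdiff hAB]
    by_cases hA : A ∈ ({P, Q, R} : Finset (ℝ × ℝ)) <;>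
      by_cases hB : B ∈ ({P, Q, R} : Finset (ℝ × ℝ))
    · rw [tot_zero hAB hA hB, if_pos hA, if_pos hB]
    · rw [if_pos hA, if_neg hB]
      simp only [Finset.mem_insert, Finset.mem_singleton, not_or] at hB
      exact tot_vertex hB.1 hB.2.1 hB.2.2 hA (H B hBm hB.1 hB.2.1 hB.2.2)
    · rw [if_pos hB, if_neg hA, Finset.pair_comm]
      simp only [Finset.mem_insert, Finset.mem_singleton, not_or] at hA
      exact tot_vertex hA.1 hA.2.1 hA.2.2 hB (H A hAm hA.1 hA.2.1 hA.2.2)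
    · rw [if_neg hA, if_neg hB]
      simp only [Finset.mem_insert, Finset.mem_singleton, not_or] at hA hB
      exact tot_two hAB (H A hAm hA.1 hA.2.1 hA.2.2)
        (hg.orD_ne hAm hBm hP hAB hA.1 hB.1) (hg.orD_ne hAm hBm hQ hAB hA.2.1 hB.2.1)
        (hg.orD_ne hAm hBm hR hAB hA.2.2 hB.2.2)

lemma mem_tri {P Q R X : ℝ × ℝ} : X ∈ convexHull ℝ ({P, Q, R} : Set (ℝ × ℝ)) ↔
    ∃ a b c : ℝ, 0 ≤ a ∧ 0 ≤ b ∧ 0 ≤ c ∧ a + b + c = 1 ∧ a • P + b • Q + c • R = X := by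
  constructor
  · intro h
    rw [convexHull_insert (by simp), convexJoin_singleton_left] at h
    simp only [Set.mem_iUnion, convexHull_pair] at h
    obtain ⟨y, ⟨u, v, hu, hv, huv, rfl⟩, ⟨s, t, hs, ht, hst, rfl⟩⟩ := h
    refine ⟨s, t * u, t * v, hs, mul_nonneg ht hu, mul_nonneg ht hv, ?_, ?_⟩
    · rw [← hst, add_assoc, ← mul_add, huv, mul_one]
    · rw [smul_add, smul_smul, smul_smul, add_assoc]
  · rintro ⟨a, b, c, ha, hb, hc, h, rfl⟩
    have hP : P ∈ convexHull ℝ ({P, Q, R} : Set (ℝ × ℝ)) := subset_convexHull ℝ _ (by simp)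
    have hQ : Q ∈ convexHull ℝ ({P, Q, R} : Set (ℝ × ℝ)) := subset_convexHull ℝ _ (by simp)
    have hR : R ∈ convexHull ℝ ({P, Q, R} : Set (ℝ × ℝ)) := subset_convexHull ℝ _ (by simp)
    have := (convex_convexHull ℝ ({P, Q, R} : Set (ℝ × ℝ))).sum_mem (t := Finset.univ)
      (w := ![a, b, c]) (z := ![P, Q, R])
      (by intro i _; fin_cases i <;> simpa) (by simpa [Fin.sum_univ_three] using h)
      (by intro i _; fin_cases i <;> simpa)
    simpa [Fin.sum_univ_three] using this

lemma ins_mem {P Q R X : ℝ × ℝ} (h : Ins P Q R X) :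
    X ∈ convexHull ℝ ({P, Q, R} : Set (ℝ × ℝ)) := by
  obtain ⟨h1, h2, h3⟩ := h
  have hs : orD P Q X + orD Q R X + orD R P X = orD P Q R := by unfold orD; ring
  have hw : orD P Q X ≠ 0 := by intro h0; rw [h0] at h1; simp at h1
  have hDw : 0 < orD P Q R * orD P Q X := by
    rw [← hs]; nlinarith [mul_self_pos.mpr hw]
  have hD : orD P Q R ≠ 0 := by intro h0; rw [h0] at hDw; simp at hDw
  have hD2 : 0 < orD P Q R ^ 2 := by positivity
  rw [mem_tri]
  have nn : ∀ u : ℝ, 0 ≤ orD P Q R * u → 0 ≤ u / orD P Q R := by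
    intro u hu
    have : u / orD P Q R = (orD P Q R * u) / orD P Q R ^ 2 := by field_simp
    rw [this]; positivity
  refine ⟨orD Q R X / orD P Q R, orD R P X / orD P Q R, orD P Q X / orD P Q R,
    nn _ ?_, nn _ ?_, nn _ hDw.le, ?_, ?_⟩
  · rw [← hs]; nlinarith [mul_self_nonneg (orD Q R X)]
  · rw [← hs]; nlinarith [mul_self_nonneg (orD R P X)]
  · field_simp; linarith
  · ext
    · simp only [Prod.fst_add, Prod.smul_fst, smul_eq_mul]
      field_simp
      unfold orD; ring
    · simp only [Prod.snd_add, Prod.smul_snd, smul_eq_mul]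
      field_simp
      unfold orD; ring

lemma km (Pts : Finset (ℝ × ℝ)) :
    convexHull ℝ (hullVertices Pts) = convexHull ℝ (↑Pts : Set (ℝ × ℝ)) := by
  have h := closure_convexHull_extremePoints (Pts.finite_toSet.isCompact_convexHull (𝕜 := ℝ))
    (convex_convexHull ℝ (↑Pts : Set (ℝ × ℝ)))
  have hf : (hullVertices Pts).Finite := Pts.finite_toSet.subset extremePoints_convexHull_subset
  rw [← h]
  exact ((hf.isClosed_convexHull (𝕜 := ℝ)).closure_eq).symm

lemma vertex_mem {Pts : Finset (ℝ × ℝ)} {P Q R : ℝ × ℝ} (hP : P ∈ Pts) (hQR : Q ≠ R)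
    (hD : orD Q R P ≠ 0) (hsub : hullVertices Pts ⊆ {P, Q, R}) : P ∈ hullVertices Pts := by
  by_contra hn
  have h2 : hullVertices Pts ⊆ {Q, R} := by
    intro x hx
    rcases hsub hx with rfl | h
    · exact absurd hx hn
    · exact h
  have h3 : P ∈ convexHull ℝ (hullVertices Pts) := by
    rw [km]; exact subset_convexHull ℝ _ hP
  have h4 := convexHull_subset_affineSpan _ (convexHull_mono h2 h3)
  exact hD ((mem_line_iff hQR).mp h4)

lemma hull_eq {Pts : Finset (ℝ × ℝ)} (hg : GenPos Pts) {P Q R : ℝ × ℝ}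
    (hP : P ∈ Pts) (hQ : Q ∈ Pts) (hR : R ∈ Pts) (hPQ : P ≠ Q) (hPR : P ≠ R) (hQR : Q ≠ R)
    (H : ∀ X ∈ Pts, X ≠ P → X ≠ Q → X ≠ R → Ins P Q R X) :
    hullVertices Pts = {P, Q, R} := by
  have hc : convexHull ℝ (↑Pts : Set (ℝ × ℝ)) = convexHull ℝ ({P, Q, R} : Set (ℝ × ℝ)) := by
    apply Set.Subset.antisymm
    · apply convexHull_min _ (convex_convexHull _ _)
      intro X hX
      by_cases h1 : X = P
      · subst h1; exact subset_convexHull ℝ _ (by simp)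
      by_cases h2 : X = Q
      · subst h2; exact subset_convexHull ℝ _ (by simp)
      by_cases h3 : X = R
      · subst h3; exact subset_convexHull ℝ _ (by simp)
      exact ins_mem (H X hX h1 h2 h3)
    · apply convexHull_mono
      rintro x (rfl | rfl | rfl) <;> assumption
  have hsub : hullVertices Pts ⊆ {P, Q, R} := by
    unfold hullVertices
    rw [hc]
    exact extremePoints_convexHull_subset
  apply Set.Subset.antisymm hsub
  rintro x (rfl | rfl | rfl)
  · exact vertex_mem hP hQR (hg.orD_ne hQ hR hP hQR hPQ.symm hPR.symm) hsub
  · refine vertex_mem hQ hPR (hg.orD_ne hP hR hQ hPR hPQ hQR.symm) (hsub.trans ?_)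
    intro y; simp; tauto
  · refine vertex_mem hR hPQ (hg.orD_ne hP hQ hR hPQ hPR hQR) (hsub.trans ?_)
    intro y; simp; tauto

lemma ins_of_hull {Pts : Finset (ℝ × ℝ)} (hg : GenPos Pts) {P Q R : ℝ × ℝ}
    (hP : P ∈ Pts) (hQ : Q ∈ Pts) (hR : R ∈ Pts) (hPQ : P ≠ Q) (hPR : P ≠ R) (hQR : Q ≠ R)
    (h : hullVertices Pts = {P, Q, R}) :
    ∀ X ∈ Pts, X ≠ P → X ≠ Q → X ≠ R → Ins P Q R X := by
  intro X hX h1 h2 h3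
  have hm : X ∈ convexHull ℝ ({P, Q, R} : Set (ℝ × ℝ)) := by
    rw [← h, km]; exact subset_convexHull ℝ _ hX
  obtain ⟨a, b, c, ha, hb, hc, hs, he⟩ := mem_tri.mp hm
  have n1 := hg.orD_ne hP hQ hX hPQ h1.symm h2.symm
  have n2 := hg.orD_ne hQ hR hX hQR h2.symm h3.symm
  have n3 := hg.orD_ne hR hP hX hPR.symm h3.symm h1.symm
  have ea : a = 1 - b - c := by linarith
  have e1 : orD P Q X = c * orD P Q R := by
    rw [← he, ea]; simp [orD]; ring
  have e2 : orD Q R X = a * orD P Q R := by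
    rw [← he, ea]; simp [orD]; ring
  have e3 : orD R P X = b * orD P Q R := by
    rw [← he, ea]; simp [orD]; ring
  have pos : ∀ u v : ℝ, 0 ≤ u → 0 ≤ v → u * orD P Q R ≠ 0 → v * orD P Q R ≠ 0 →
      0 < u * orD P Q R * (v * orD P Q R) := by
    intro u v hu hv h1 h2
    apply lt_of_le_of_ne _ (mul_ne_zero h1 h2).symm
    have : u * orD P Q R * (v * orD P Q R) = u * v * (orD P Q R * orD P Q R) := by ring
    rw [this]
    exact mul_nonneg (mul_nonneg hu hv) (mul_self_nonneg _)
  rw [e1] at n1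
  rw [e2] at n2
  rw [e3] at n3
  unfold Ins
  rw [e1, e2, e3]
  exact ⟨pos _ _ hc ha n1 n2, pos _ _ ha hb n2 n3, pos _ _ hc hb n1 n3⟩

/-- The convex hull of a configuration of `n` points in general position has size `3` if and
only if there exist three distinct points `P`, `Q`, `R` of the configuration with
`n(P,Q) + n(P,R) + n(Q,R) = n² - 4n + 3`; moreover, in that case `P`, `Q`, `R` are exactly
the vertices of the convex hull. -/
theorem hull_three_iff_sepCount_sum (n : ℕ) (Pts : Finset (ℝ × ℝ))
    (hgen : GenPos Pts) (hcard : Pts.card = n) :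
    ((hullVertices Pts).ncard = 3 ↔
      ∃ P ∈ Pts, ∃ Q ∈ Pts, ∃ R ∈ Pts, P ≠ Q ∧ P ≠ R ∧ Q ≠ R ∧
        (sepCount Pts P Q + sepCount Pts P R + sepCount Pts Q R : ℤ)
          = (n : ℤ)^2 - 4 * n + 3) ∧
    ∀ P ∈ Pts, ∀ Q ∈ Pts, ∀ R ∈ Pts, P ≠ Q → P ≠ R → Q ≠ R →
      (sepCount Pts P Q + sepCount Pts P R + sepCount Pts Q R : ℤ)
        = (n : ℤ)^2 - 4 * n + 3 →
      hullVertices Pts = {P, Q, R} := by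
  subst hcard
  refine ⟨⟨?_, ?_⟩, ?_⟩
  · intro h
    obtain ⟨P, Q, R, hPQ, hPR, hQR, he⟩ := Set.ncard_eq_three.mp h
    have hsub : hullVertices Pts ⊆ ↑Pts := extremePoints_convexHull_subset
    have hP : P ∈ Pts := hsub (by simp [he])
    have hQ : Q ∈ Pts := hsub (by simp [he])
    have hR : R ∈ Pts := hsub (by simp [he])
    exact ⟨P, hP, Q, hQ, R, hR, hPQ, hPR, hQR, (sum_iff hgen hP hQ hR hPQ hPR hQR).mpr
      (ins_of_hull hgen hP hQ hR hPQ hPR hQR he)⟩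
  · rintro ⟨P, hP, Q, hQ, R, hR, hPQ, hPR, hQR, h⟩
    exact Set.ncard_eq_three.mpr ⟨P, Q, R, hPQ, hPR, hQR, hull_eq hgen hP hQ hR hPQ hPR hQR
      ((sum_iff hgen hP hQ hR hPQ hPR hQR).mp h)⟩
  · intro P hP Q hQ R hR hPQ hPR hQR h
    exact hull_eq hgen hP hQ hR hPQ hPR hQR ((sum_iff hgen hP hQ hR hPQ hPR hQR).mp h)
end
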